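/- There exists an absolute constant C > 0 such that for all positive integers n, r, a with r ∣ n, a < r, and n − (n/r)·a − 2 > 0, there exists a prime power q ≤ C·n for which a maximally recoverable (n, r, h=2, a, q)-local reconstruction code exists. -/

import Mathlib

/-- The parity check matrix of an `(n, r, h, a, q)`-local reconstruction code with `g = n/r`
local groups, given by local-parity matrices `A i` (in block-diagonal position) and
heavy-parity matrices `B i`. Rows are indexed by `(Fin g × Fin a) ⊕ Fin h`
(local parity rows first, then the `h` heavy rows) and columns by `Fin g × Fin r`
(the `i`-th local group consists of the columns with first coordinate `i`). -/
def lrcParityCheck (F : Type) [Field F] (g r a h : ℕ)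
    (A : Fin g → Matrix (Fin a) (Fin r) F)
    (B : Fin g → Matrix (Fin h) (Fin r) F) :
    Matrix ((Fin g × Fin a) ⊕ Fin h) (Fin g × Fin r) F :=
  fun ρ c =>
    Sum.elim (fun p : Fin g × Fin a => if p.1 = c.1 then A p.1 p.2 c.2 else 0)
      (fun j : Fin h => B c.1 j c.2) ρ

/-- `A, B` define a maximally recoverable LRC:  every `a × a` minor of each `A i` is
nonzero (stated: any `a` columns of `A i` are linearly independent), and for every set `E`
of `a * g + h` columns containing at least `a` columns from each local group, the
corresponding columns of the parity check matrix are linearly independent (equivalently,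
the square submatrix of the parity check matrix on the columns of `E` is invertible). -/
def IsMRLRC (F : Type) [Field F] (g r a h : ℕ)
    (A : Fin g → Matrix (Fin a) (Fin r) F)
    (B : Fin g → Matrix (Fin h) (Fin r) F) : Prop :=
  (∀ i : Fin g, ∀ S : Finset (Fin r), S.card = a →
      LinearIndependent F (fun c : {x // x ∈ S} => fun j : Fin a => A i j c.1)) ∧
  (∀ E : Finset (Fin g × Fin r), E.card = a * g + h →
      (∀ i : Fin g, a ≤ (E.filter (fun x => x.1 = i)).card) →
      LinearIndependent F
        (fun c : {x // x ∈ E} => fun ρ => lrcParityCheck F g r a h A B ρ c.1))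

/-- There is a maximally recoverable `(n = g * r, r, h, a, q)`-local reconstruction code
with `g` local groups each of size `r`, over the field with `q` elements. -/
def ExistsMRLRC (g r h a q : ℕ) : Prop :=
  ∃ (F : Type) (_ : Field F) (_ : Fintype F),
    Fintype.card F = q ∧
      ∃ (A : Fin g → Matrix (Fin a) (Fin r) F) (B : Fin g → Matrix (Fin h) (Fin r) F),
        IsMRLRC F g r a h A B

open Polynomial in
theorem lrc_moment_poly {F ι : Type} [Field F] (S : Finset ι) (α x : ι → F) (p : F[X]) (N : ℕ)
    (hN : p.natDegree < N) :
    ∑ k ∈ S, x k * p.eval (α k)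
      = ∑ j ∈ Finset.range N, p.coeff j * ∑ k ∈ S, x k * α k ^ j := by
  simp_rw [Finset.mul_sum]
  rw [Finset.sum_comm]
  refine Finset.sum_congr rfl fun k _ => ?_
  rw [Polynomial.eval_eq_sum_range' hN, Finset.mul_sum]
  exact Finset.sum_congr rfl fun j _ => by ring

open Polynomial in
/-- Vandermonde. -/
theorem lrc_vandermonde {F ι : Type} [Field F] [DecidableEq ι] (S : Finset ι) (α x : ι → F)
    (hα : Function.Injective α)
    (h : ∀ j < S.card, ∑ k ∈ S, x k * α k ^ j = 0) : ∀ k ∈ S, x k = 0 := by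
  intro t ht
  have hdeg : (∏ s ∈ S.erase t, (X - C (α s))).natDegree < S.card := by
    rw [Polynomial.natDegree_prod_of_monic _ _ fun s _ => monic_X_sub_C _]
    simp [Finset.card_erase_of_mem ht, Finset.card_pos.2 ⟨t, ht⟩]
  have h1 := lrc_moment_poly S α x _ _ hdeg
  rw [Finset.sum_eq_zero (s := Finset.range _)
    (fun j hj => by rw [h j (Finset.mem_range.1 hj), mul_zero]),
    Finset.sum_eq_single_of_mem t ht] at h1
  · refine (mul_eq_zero.1 h1).resolve_right ?_
    rw [Polynomial.eval_prod]
    refine Finset.prod_ne_zero_iff.2 ?_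
    intro s hs
    simp only [eval_sub, eval_X, eval_C]
    intro h0
    exact (Finset.ne_of_mem_erase hs) (hα (sub_eq_zero.1 h0)).symm
  · intro b hb hbt
    rw [Polynomial.eval_prod, Finset.prod_eq_zero (Finset.mem_erase.2 ⟨hbt, hb⟩), mul_zero]
    simp

open Polynomial in
theorem lrc_next_moment {F ι : Type} [Field F] (S : Finset ι) (α x : ι → F) (a : ℕ)
    (hS : S.card = a + 1)
    (h : ∀ j < a, ∑ k ∈ S, x k * α k ^ j = 0) :
    ∑ k ∈ S, x k * α k ^ (a + 1) = (∑ k ∈ S, α k) * ∑ k ∈ S, x k * α k ^ a := by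
  have hmon : (∏ s ∈ S, (X - C (α s))).Monic := monic_prod_of_monic _ _ fun s _ => monic_X_sub_C _
  have hnd : (∏ s ∈ S, (X - C (α s))).natDegree = a + 1 := by
    rw [Polynomial.natDegree_prod_of_monic _ _ fun s _ => monic_X_sub_C _]
    simp [hS]
  have h1 := lrc_moment_poly S α x (∏ s ∈ S, (X - C (α s))) (a + 2) (by omega)
  rw [Finset.sum_eq_zero (s := S), Finset.sum_range_succ, Finset.sum_range_succ,
    Finset.sum_eq_zero (s := Finset.range _)
    (fun j hj => by rw [h j (Finset.mem_range.1 hj), mul_zero])] at h1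
  · have hc := prod_X_sub_C_coeff_card_pred S α (by omega)
    rw [hS, Nat.add_sub_cancel] at hc
    have hl : (∏ s ∈ S, (X - C (α s))).coeff (a + 1) = 1 := by
      rw [← hnd]; exact hmon.coeff_natDegree
    rw [hc, hl] at h1
    linear_combination -h1
  · intro k hk
    rw [Polynomial.eval_prod, Finset.prod_eq_zero hk, mul_zero]
    simp

theorem lrc_construction {F V : Type} [Field F] [AddCommGroup V] (g r a : ℕ)
    (π : F →+ V) (α : Fin r → F) (l : Fin g → F) (hα : Function.Injective α)
    (hπ : ∀ k, π (α k) = 0) (hl : Function.Injective fun i => π (l i)) :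
    IsMRLRC F g r a 2 (fun _ j k => α k ^ (j : ℕ))
      (fun i => ![fun k => α k ^ a, fun k => α k ^ (a + 1) + l i * α k ^ a]) := by
  classical
  refine ⟨?_, ?_⟩
  · intro i S hS
    have : LinearIndepOn F (fun c : Fin r => fun j : Fin a => α c ^ (j : ℕ)) (S : Set (Fin r)) := by
      rw [linearIndepOn_finset_iff]
      intro f hf
      refine lrc_vandermonde S α f hα ?_
      intro j hj
      have := congrFun hf ⟨j, hS ▸ hj⟩
      simpa using this
    exact this
  · intro E hE hEi
    have : LinearIndepOn F (fun c => fun ρ => lrcParityCheck F g r a 2 (fun _ j k => α k ^ (j : ℕ))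
      (fun i => ![fun k => α k ^ a, fun k => α k ^ (a + 1) + l i * α k ^ a]) ρ c)
      (E : Set (Fin g × Fin r)) := by
      rw [linearIndepOn_finset_iff]
      intro f hf
      obtain ⟨T, hT⟩ : ∃ T : Fin g → Finset (Fin r), ∀ i k, k ∈ T i ↔ (i, k) ∈ E :=
        ⟨fun i => Finset.univ.filter fun k => (i, k) ∈ E, by simp⟩
      have hsum : ∀ φ : Fin g × Fin r → F,
          ∑ c ∈ E, φ c = ∑ i, ∑ k ∈ T i, φ (i, k) := fun φ =>
        Finset.sum_finset_product E Finset.univ T (by simp [hT])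
      have hcard : ∑ i, (T i).card = a * g + 2 := by
        rw [← hE, Finset.card_eq_sum_ones,
          Finset.sum_finset_product E Finset.univ T (by simp [hT])]
        simp
      have hTa : ∀ i, a ≤ (T i).card := by
        intro i
        refine (hEi i).trans (Finset.card_le_card_of_injOn Prod.snd ?_ ?_)
        · rintro ⟨i', k⟩ hc
          simp only [Finset.coe_filter, Set.mem_ofPred_eq] at hc
          obtain ⟨hc, rfl⟩ := hc
          simpa [hT] using hc
        · rintro ⟨i', k⟩ hc ⟨i'', k'⟩ hc' hkk
          simp only [Finset.coe_filter, Set.mem_ofPred_eq] at hc hc'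
          simp only at hkk
          rw [hkk, hc.2, hc'.2]
      obtain ⟨M, hM⟩ : ∃ M : Fin g → ℕ → F, ∀ i j, M i j = ∑ k ∈ T i, f (i, k) * α k ^ j :=
        ⟨_, fun _ _ => rfl⟩
      have hlow : ∀ i, ∀ j < a, M i j = 0 := by
        intro i j hj
        have h1 := congrFun hf (Sum.inl (i, ⟨j, hj⟩))
        simp only [Finset.sum_apply, Pi.smul_apply, smul_eq_mul, lrcParityCheck, Sum.elim_inl,
          Pi.zero_apply] at h1
        rw [hsum, Finset.sum_eq_single_of_mem i (Finset.mem_univ _)] at h1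
        · rw [hM]; simpa using h1
        · intro b _ hb
          exact Finset.sum_eq_zero fun k _ => by simp [Ne.symm hb]
      have hb1 : ∑ i, M i a = 0 := by
        have h1 := congrFun hf (Sum.inr 0)
        simp only [Finset.sum_apply, Pi.smul_apply, smul_eq_mul, lrcParityCheck, Sum.elim_inr,
          Pi.zero_apply] at h1
        rw [hsum] at h1
        simpa [hM] using h1
      have hb2 : ∑ i, (M i (a + 1) + l i * M i a) = 0 := by
        have h1 := congrFun hf (Sum.inr 1)
        simp only [Finset.sum_apply, Pi.smul_apply, smul_eq_mul, lrcParityCheck, Sum.elim_inr,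
          Pi.zero_apply] at h1
        rw [hsum] at h1
        rw [← h1]
        refine Finset.sum_congr rfl fun i _ => ?_
        rw [hM, hM, Finset.mul_sum, ← Finset.sum_add_distrib]
        refine Finset.sum_congr rfl fun k _ => ?_
        simp
        ring
      have hvan : ∀ i, (∀ j < (T i).card, M i j = 0) → ∀ k ∈ T i, f (i, k) = 0 := by
        intro i h
        exact lrc_vandermonde (T i) α (fun k => f (i, k)) hα (fun j hj => by rw [← hM]; exact h j hj)
      have hzero : ∀ i, (T i).card = a → ∀ j, M i j = 0 := by
        intro i hi j
        have := hvan i (fun j hj => hlow i j (hi ▸ hj))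
        rw [hM]
        exact Finset.sum_eq_zero fun k hk => by rw [this k hk, zero_mul]
      obtain ⟨e, he⟩ : ∃ e : Fin g → ℕ, ∀ i, (T i).card = a + e i :=
        ⟨fun i => (T i).card - a, fun i => (Nat.add_sub_cancel' (hTa i)).symm⟩
      have hesum : ∑ i, e i = 2 := by
        simp only [he, Finset.sum_add_distrib, Finset.sum_const, Finset.card_univ,
          Fintype.card_fin, smul_eq_mul] at hcard
        rw [mul_comm] at hcard
        omega
      suffices hall : ∀ i, ∀ j < (T i).card, M i j = 0 by
        rintro ⟨i, k⟩ hc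
        exact hvan i (hall i) k ((hT i k).2 hc)
      obtain ⟨i₀, hi₀⟩ : ∃ i, 0 < e i := by
        by_contra! h
        have : ∑ i, e i = 0 := Finset.sum_eq_zero fun i _ => Nat.le_zero.1 (h i)
        omega
      have hs0 := Finset.add_sum_erase Finset.univ e (Finset.mem_univ i₀)
      by_cases hex : ∃ j₀, j₀ ≠ i₀ ∧ 0 < e j₀
      · obtain ⟨j₀, hne, hj₀⟩ := hex
        have hs1 := Finset.add_sum_erase (Finset.univ.erase i₀) e
          (Finset.mem_erase.2 ⟨hne, Finset.mem_univ j₀⟩)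
        have hi1 : e i₀ = 1 := by omega
        have hj1 : e j₀ = 1 := by omega
        have hrest : ∀ i, i ≠ i₀ → i ≠ j₀ → e i = 0 := by
          intro i h1 h2
          have : ∑ i ∈ (Finset.univ.erase i₀).erase j₀, e i = 0 := by omega
          exact (Finset.sum_eq_zero_iff.1 this) i (by simp [h1, h2])
        have hMz : ∀ i, i ≠ i₀ → i ≠ j₀ → ∀ j, M i j = 0 := fun i h1 h2 =>
          hzero i (by rw [he, hrest i h1 h2, add_zero])
        rw [Fintype.sum_eq_add i₀ j₀ hne.symm (fun i h => hMz i h.1 h.2 _)] at hb1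
        rw [Fintype.sum_eq_add i₀ j₀ hne.symm
          (fun i h => by rw [hMz i h.1 h.2, hMz i h.1 h.2]; simp)] at hb2
        have hn : ∀ i, e i = 1 → M i (a + 1) = (∑ k ∈ T i, α k) * M i a := by
          intro i hi
          rw [hM, hM]
          exact lrc_next_moment (T i) α (fun k => f (i, k)) a (by rw [he, hi])
            (fun j hj => by rw [← hM]; exact hlow i j hj)
        rw [hn _ hi1, hn _ hj1] at hb2
        have hprod : ((∑ k ∈ T i₀, α k) + l i₀ - ((∑ k ∈ T j₀, α k) + l j₀)) * M i₀ a = 0 := by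
          linear_combination hb2 - ((∑ k ∈ T j₀, α k) + l j₀) * hb1
        have hMi : M i₀ a = 0 := by
          refine (mul_eq_zero.1 hprod).resolve_left fun h0 => hne ?_
          have := congrArg π (sub_eq_zero.1 h0)
          simp only [map_add, map_sum, hπ, Finset.sum_const_zero, zero_add] at this
          exact (hl this).symm
        have hMj : M j₀ a = 0 := by rw [hMi, zero_add] at hb1; exact hb1
        intro i j hj
        by_cases h1 : i = i₀
        · subst h1
          rcases Nat.lt_or_ge j a with h | h
          · exact hlow _ _ h
          · have : j = a := by have := he i; omega
            rw [this, hMi]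
        by_cases h2 : i = j₀
        · subst h2
          rcases Nat.lt_or_ge j a with h | h
          · exact hlow _ _ h
          · have : j = a := by have := he i; omega
            rw [this, hMj]
        exact hMz i h1 h2 j
      · push Not at hex
        have hMz : ∀ i, i ≠ i₀ → ∀ j, M i j = 0 := fun i h1 =>
          hzero i (by rw [he, Nat.le_zero.1 (hex i h1), add_zero])
        rw [Fintype.sum_eq_single i₀ (fun i h => hMz i h _)] at hb1
        rw [Fintype.sum_eq_single i₀ (fun i h => by rw [hMz i h, hMz i h]; simp)] at hb2
        rw [hb1, mul_zero, add_zero] at hb2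
        intro i j hj
        by_cases h1 : i = i₀
        · subst h1
          rcases Nat.lt_or_ge j a with h | h
          · exact hlow _ _ h
          · have : j = a ∨ j = a + 1 := by have := he i; omega
            rcases this with rfl | rfl
            · exact hb1
            · exact hb2
        exact hMz i h1 j
    exact this

theorem lrc_exists (g r a : ℕ) :
    ExistsMRLRC g r 2 a (2 ^ ((Nat.log 2 r + 1) + (Nat.log 2 g + 1))) := by
  classical
  have hm : (Nat.log 2 r + 1) + (Nat.log 2 g + 1) ≠ 0 := by omega
  have hF : Fintype (GaloisField 2 ((Nat.log 2 r + 1) + (Nat.log 2 g + 1))) := Fintype.ofFinite _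
  refine ⟨GaloisField 2 ((Nat.log 2 r + 1) + (Nat.log 2 g + 1)), inferInstance, hF, ?_, ?_⟩
  · rw [← Nat.card_eq_fintype_card, GaloisField.card 2 _ hm]
  have hfr : Module.finrank (ZMod 2) (GaloisField 2 ((Nat.log 2 r + 1) + (Nat.log 2 g + 1))) =
      Module.finrank (ZMod 2)
        ((Fin (Nat.log 2 r + 1) → ZMod 2) × (Fin (Nat.log 2 g + 1) → ZMod 2)) := by
    rw [GaloisField.finrank 2 hm]; simp
  have hemb : ∀ s, Nonempty (Fin s ↪ (Fin (Nat.log 2 s + 1) → ZMod 2)) := by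
    intro s
    refine Function.Embedding.nonempty_of_card_le ?_
    simpa [ZMod.card] using (Nat.lt_pow_succ_log_self (by norm_num : 1 < 2) s).le
  obtain ⟨er⟩ := hemb r
  obtain ⟨eg⟩ := hemb g
  let φ := LinearEquiv.ofFinrankEq _ _ hfr
  refine ⟨_, _, lrc_construction g r a
    ((AddMonoidHom.snd _ _).comp φ.toLinearMap.toAddMonoidHom)
    (fun k => φ.symm (er k, 0)) (fun i => φ.symm (0, eg i)) ?_ ?_ ?_⟩
  · intro k k' h
    have := φ.symm.injective h
    exact er.injective (Prod.ext_iff.1 this).1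
  · intro k
    simp
  · intro i i' h
    apply eg.injective
    simpa using h

/-- **Theorem 4.4.** There is an absolute constant `C > 0` such that for all positive
integers `n, r, a` with `r ∣ n`, `a < r` and `n - (n/r)·a - 2 > 0`, there is a prime power
`q ≤ C·n` for which a maximally recoverable `(n, r, h = 2, a, q)`-local reconstruction
code exists. -/
theorem exists_mrlrc_h2_linear_field_size :
    ∃ C : ℝ, 0 < C ∧
      ∀ n r a : ℕ, 0 < r → r ∣ n → a < r → (n / r) * a + 2 < n →
        ∃ q : ℕ, IsPrimePow q ∧ (q : ℝ) ≤ C * (n : ℝ) ∧ ExistsMRLRC (n / r) r 2 a q := by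
  refine ⟨4, by norm_num, ?_⟩
  intro n r a hr hrn ha hn
  refine ⟨_, ?_, ?_, lrc_exists (n / r) r a⟩
  · exact (Nat.prime_two.isPrimePow).pow (by omega)
  · have h1 : 2 ^ Nat.log 2 r ≤ r := Nat.pow_log_le_self 2 hr.ne'
    have hg : n / r ≠ 0 := by
      have := Nat.div_pos (Nat.le_of_dvd (by omega) hrn) hr
      omega
    have h2 : 2 ^ Nat.log 2 (n / r) ≤ n / r := Nat.pow_log_le_self 2 hg
    have h3 : 2 ^ (Nat.log 2 r + 1 + (Nat.log 2 (n / r) + 1)) ≤ 4 * n := by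
      calc 2 ^ (Nat.log 2 r + 1 + (Nat.log 2 (n / r) + 1))
          = 4 * (2 ^ Nat.log 2 r * 2 ^ Nat.log 2 (n / r)) := by ring
        _ ≤ 4 * (r * (n / r)) := by gcongr
        _ = 4 * n := by rw [Nat.mul_div_cancel' hrn]
    exact_mod_cast h3
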